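/- Let ω = (ω_n, …, ω_1, ω_0) be a general basis of the polynomials of degree ≤ n over a field F, let F(x) = Σ_{i=0}^n a_i ω_i and G(x) = Σ_{i=0}^m b_i ω_i with deg F = n, deg G = m, n > m, and assume F is squarefree, i.e. its roots α_1, …, α_n in the algebraic closure F̄ are pairwise distinct. Then for every 0 ≤ k ≤ m, the k-th subresultant polynomial satisfies S_k = (−1)^{(n−k)(n−k−1)/2} · a_n^{m−n} · detp_ω(B_{ω,k}) as an identity in F̄[x] (equivalently, a_n^{n−m} · S_k = (−1)^{(n−k)(n−k−1)/2} · detp_ω(B_{ω,k})), where B_{ω,k} is the (n−k)×n submatrix of the Bézout matrix B_ω of F and G in the basis ω obtained by deleting its last k rows. -/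

import Mathlib

open Polynomial Matrix BigOperators

noncomputable section

/-- A *general basis* of the polynomials of degree ≤ `n` over `K`:
`ω i` is monic of degree `i` for every `i ≤ n`. -/
def IsGeneralBasis {K : Type*} [Field K] (n : ℕ) (ω : ℕ → Polynomial K) : Prop :=
  ∀ i ≤ n, (ω i).Monic ∧ (ω i).natDegree = i

/-- `B` is the Bézout matrix of `P` and `Q` in the basis `ω`:
`P(x)Q(y) − P(y)Q(x) = (x − y) · ω̄(x)ᵀ B ω̄(y)` in `K[x,y] = (K[y])[x]`,
where the outer variable is `x` and the inner one is `y`, and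
`ω̄ = (ω_{n−1}, …, ω_1, ω_0)ᵀ`. -/
def BezoutRelation {K : Type*} [Field K] (n : ℕ) (ω : ℕ → Polynomial K)
    (P Q : Polynomial K) (B : Matrix (Fin n) (Fin n) K) : Prop :=
  P.map Polynomial.C * Polynomial.C Q - Polynomial.C P * Q.map Polynomial.C =
    (Polynomial.X - Polynomial.C Polynomial.X) *
      ∑ i : Fin n, ∑ j : Fin n,
        (ω (n - 1 - (i : ℕ))).map Polynomial.C * Polynomial.C (ω (n - 1 - (j : ℕ))) *
          Polynomial.C (Polynomial.C (B i j))

/-- The `(n−k) × n` submatrix of an `n × n` matrix obtained by deleting the last `k` rows. -/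
def topRows {K : Type*} (n k : ℕ) (B : Matrix (Fin n) (Fin n) K) :
    Matrix (Fin (n - k)) (Fin n) K :=
  Matrix.of fun i j => B ⟨(i : ℕ), by have := i.isLt; omega⟩ j

/-- The determinental polynomial of an `(n−k) × n` matrix `M` associated with `ω`:
`detp_ω M = Σ_{i=0}^k det(M̂_i) · ω_i` where `M̂_i` consists of the first `n−k−1`
columns of `M` together with its (1-based) `(n−i)`-th column. -/
def detp {K : Type*} [Field K] {n k : ℕ} (hkn : k < n) (ω : ℕ → Polynomial K)
    (M : Matrix (Fin (n - k)) (Fin n) K) : Polynomial K :=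
  ∑ i ∈ Finset.range (k + 1),
    Polynomial.C (Matrix.det (Matrix.of fun r c : Fin (n - k) =>
      if (c : ℕ) < n - k - 1 then M r ⟨(c : ℕ), by have := c.isLt; omega⟩
      else M r ⟨n - 1 - i, by omega⟩)) * ω i

/-- The Vandermonde-type matrix with `(i,j)` entry `α_j^{n−i}` (1-based `i`). -/
def vmat {L : Type*} [Field L] (n : ℕ) (α : Fin n → L) : Matrix (Fin n) (Fin n) L :=
  Matrix.of fun i j => α j ^ (n - 1 - (i : ℕ))

/-- The `(n+1) × (n+1)` matrix whose determinant is the numerator `D` in the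
root expression of the `k`-th subresultant polynomial (power basis):
rows `1,…,n−k` have entries `α_j^{n−k−i} G(α_j)` (last column `0`),
rows `n−k+1,…,n+1` have entries `α_j^{k+1−i}` (last column `x^{k+1−i}`). -/
def subresNum {K L : Type*} [Field K] [Field L] [Algebra K L] (n k : ℕ)
    (α : Fin n → L) (G : Polynomial K) :
    Matrix (Fin (n + 1)) (Fin (n + 1)) (Polynomial L) :=
  Matrix.of fun i j =>
    if hj : (j : ℕ) < n then
      if (i : ℕ) < n - k then
        Polynomial.C (α ⟨(j : ℕ), hj⟩ ^ (n - k - 1 - (i : ℕ)) *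
          Polynomial.aeval (α ⟨(j : ℕ), hj⟩) G)
      else Polynomial.C (α ⟨(j : ℕ), hj⟩ ^ (n - (i : ℕ)))
    else
      if (i : ℕ) < n - k then 0 else Polynomial.X ^ (n - (i : ℕ))

/-- The `k`-th subresultant polynomial of `P` and `G` in terms of the roots `α` of `P`:
`S_k = (−1)^k a^{m−k} · D / V`. -/
def subresPoly {K L : Type*} [Field K] [Field L] [Algebra K L] (n m k : ℕ)
    (a : K) (α : Fin n → L) (G : Polynomial K) : Polynomial L :=
  Polynomial.C ((-1) ^ k * algebraMap K L a ^ (m - k) / (vmat n α).det) *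
    (subresNum n k α G).det

/-!
At a root `α` of `P` the Bézout relation becomes
`∑ᵢ ω_{n-i}(x) (B ω̄(α))ᵢ = Q(α) P(x) / (x - α)`. Comparing the `n - k` leading coefficients for all
the roots gives `Aᵀ (B_k W) = T (V' Δ)`, where `A` is unitriangular, `W = (ω_{n-i}(αⱼ))`, `T` is the
antitriangular Hankel matrix of the leading coefficients of `P`, `V'` is the matrix of the powers
`αⱼ ^ (n-k-i)`, and `Δ` is the diagonal matrix of the values `Q(αⱼ)`. Hence, up to unitriangular
factors, the matrix of the root expression of `S_k`, with its upper `n - k` rows multiplied by `T`,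
is the product of

    ⎡ B_k      0          ⎤         ⎡ W  0 ⎤
    ⎣ (0  1)   ω_low(x)   ⎦   and   ⎣ 0  1 ⎦,

where `ω_low = (ω_k, …, ω_0)ᵀ`. The determinant of the second factor is the Vandermonde
determinant. In the first, moving the last column in front of the last `k + 1` columns of `B_k`
costs the sign `(-1) ^ (k + 1)`, and then the Schur complement of the identity block has determinant
`-detp (B_k)`; these signs cancel against the factor `(-1) ^ k` of `S_k`. What remains is the sign
of `det T = (-1) ^ ((n-k)(n-k-1)/2) a_n ^ (n-k)`.
-/

section Determinants

theorem sign_revPerm (r : ℕ) :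
    Equiv.Perm.sign (Fin.revPerm : Equiv.Perm (Fin r)) = (-1) ^ (r * (r - 1) / 2) := by
  have inversions (j : Fin r) : (∏ i ∈ Finset.Iio j,
      if Fin.revPerm i < Fin.revPerm j then (1 : ℤˣ) else -1) = (-1) ^ (j : ℕ) := by
    rw [Finset.prod_congr rfl (g := fun _ => (-1 : ℤˣ)), Finset.prod_const, Fin.card_Iio]
    intro i hi
    rw [if_neg]
    simpa using (Finset.mem_Iio.mp hi).le
  rw [Equiv.Perm.sign_eq_prod_prod_Iio, Finset.prod_congr rfl fun j _ => inversions j,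
    Finset.prod_pow_eq_pow_sum, ← Finset.sum_range (fun i => i), Finset.sum_range_id]

theorem det_of_antitriangular {R : Type*} [CommRing R] {r : ℕ} (M : Matrix (Fin r) (Fin r) R)
    (hM : ∀ i j, j < i.rev → M i j = 0) :
    M.det = (-1) ^ (r * (r - 1) / 2) * ∏ i, M i i.rev := by
  have hlower : (M.submatrix id Fin.revPerm).IsLowerTriangular := fun i j hij =>
    hM i j.rev (Fin.rev_lt_rev.mpr hij)
  have hdet := det_permute' Fin.revPerm M
  rw [det_of_isLowerTriangular _ hlower, sign_revPerm] at hdet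
  simp only [submatrix_apply, id, Fin.revPerm_apply] at hdet
  rw [hdet, ← mul_assoc]
  simp [← mul_pow]

theorem det_submatrix_mul_left {ι κ R : Type*} [Fintype ι] [DecidableEq ι] [CommRing R]
    (A : Matrix ι ι R) (M : Matrix ι κ R) (e : ι → κ) :
    ((A * M).submatrix id e).det = A.det * (M.submatrix id e).det := by
  rw [← det_mul]
  rfl

theorem det_submatrix_mul_right {ι κ R : Type*} [Fintype ι] [Fintype κ] [DecidableEq ι]
    [DecidableEq κ] [CommRing R] (M : Matrix ι κ R) (A : Matrix κ κ R) (e : ι ≃ κ) :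
    ((M * A).submatrix id e).det = (M.submatrix id e).det * A.det := by
  rw [← submatrix_mul_equiv M A id e e, det_mul, det_submatrix_equiv_self]

end Determinants

section Evaluation

variable {K R ι : Type*} [CommRing R]

/-- The rectangular version of `vmat`: the columns are `(z_j ^ (d - 1), …, z_j, 1)`. -/
def rectVmat (d : ℕ) (z : ι → R) : Matrix (Fin d) ι R :=
  of fun i j => z j ^ (d - 1 - (i : ℕ))

/-- The matrix whose columns are the values `(ω_{d-1}(z_j), …, ω_0(z_j))`. -/
def evalMatrix [CommRing K] [Algebra K R] (d : ℕ) (ω : ℕ → K[X]) (z : ι → R) :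
    Matrix (Fin d) ι R :=
  of fun i j => aeval (z j) (ω (d - 1 - (i : ℕ)))

/-- The top left `r × r` block of the matrix expressing `(ω_{n-1}, …, ω_0)` in terms of
`(x ^ (n - 1), …, 1)`. -/
def coeffMatrix [CommRing K] (n r : ℕ) (ω : ℕ → K[X]) : Matrix (Fin r) (Fin r) K :=
  of fun i j => (ω (n - 1 - (i : ℕ))).coeff (n - 1 - (j : ℕ))

theorem aeval_eq_sum_fin_desc [CommRing K] [Algebra K R] {d : ℕ} {p : K[X]}
    (hp : p.natDegree < d) (x : R) :
    aeval x p = ∑ i : Fin d, algebraMap K R (p.coeff (d - 1 - i)) * x ^ (d - 1 - (i : ℕ)) := by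
  rw [aeval_eq_sum_range' hp, ← Finset.sum_range_reflect, Finset.sum_range]
  simp only [Algebra.smul_def]

variable [Field K]

theorem IsGeneralBasis.coeff_eq_zero {n i j : ℕ} {ω : ℕ → K[X]} (hω : IsGeneralBasis n ω)
    (hi : i ≤ n) (hij : i < j) : (ω i).coeff j = 0 :=
  coeff_eq_zero_of_natDegree_lt (by rwa [(hω i hi).2])

theorem IsGeneralBasis.coeff_self {n i : ℕ} {ω : ℕ → K[X]} (hω : IsGeneralBasis n ω)
    (hi : i ≤ n) : (ω i).coeff i = 1 := by
  simpa [(hω i hi).2] using (hω i hi).1.coeff_natDegree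

theorem IsGeneralBasis.det_coeffMatrix {n d r : ℕ} {ω : ℕ → K[X]} (hω : IsGeneralBasis n ω)
    (hdn : d ≤ n + 1) (hrd : r ≤ d) : (coeffMatrix d r ω).det = 1 := by
  have hupper : (coeffMatrix d r ω).IsUpperTriangular := fun i j (hij : j < i) =>
    hω.coeff_eq_zero (by omega) (by omega)
  rw [det_of_isUpperTriangular hupper]
  exact Finset.prod_eq_one fun i _ => hω.coeff_self (by omega)

variable [Algebra K R]

theorem IsGeneralBasis.det_map_coeffMatrix {n d r : ℕ} {ω : ℕ → K[X]} (hω : IsGeneralBasis n ω)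
    (hdn : d ≤ n + 1) (hrd : r ≤ d) : ((coeffMatrix d r ω).map (algebraMap K R)).det = 1 := by
  rw [← RingHom.mapMatrix_apply, ← RingHom.map_det, hω.det_coeffMatrix hdn hrd, map_one]

theorem IsGeneralBasis.evalMatrix_eq {n d : ℕ} {ω : ℕ → K[X]} (hω : IsGeneralBasis n ω)
    (hdn : d ≤ n + 1) (z : ι → R) :
    evalMatrix d ω z = (coeffMatrix d d ω).map (algebraMap K R) * rectVmat d z :=
  Matrix.ext fun i j => aeval_eq_sum_fin_desc (by rw [(hω _ (by omega)).2]; omega) (z j)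

theorem IsGeneralBasis.det_evalMatrix {n : ℕ} {ω : ℕ → K[X]} (hω : IsGeneralBasis n ω)
    (z : Fin n → R) : (evalMatrix n ω z).det = (rectVmat n z).det := by
  rw [hω.evalMatrix_eq (Nat.le_succ n), det_mul,
    hω.det_map_coeffMatrix (Nat.le_succ n) le_rfl, one_mul]

theorem det_vmat_ne_zero {n : ℕ} {α : Fin n → K} (hα : Function.Injective α) :
    (vmat n α).det ≠ 0 := by
  have h : vmat n α = (vandermonde α)ᵀ.submatrix Fin.revPerm id := by
    ext i j
    simp [vmat, vandermonde_apply, Fin.val_rev, Nat.sub_sub, add_comm]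
  rw [h, det_permute, det_transpose, sign_revPerm]
  exact mul_ne_zero (by simp) (det_vandermonde_ne_zero_iff.mpr hα)

end Evaluation

section BezoutMatrix

variable {K R ι : Type*} [CommRing R]

theorem coeff_divByMonic_X_sub_C_eq_sum_fin {p : R[X]} {n r i : ℕ} (hp : p.natDegree ≤ n)
    (hir : i < r) (hrn : r ≤ n) (a : R) :
    (p /ₘ (X - C a)).coeff (n - 1 - i) =
      ∑ l : Fin r, p.coeff (n - i + (r - 1 - l)) * a ^ (r - 1 - (l : ℕ)) := by
  have hsub : Finset.Icc (n - i) p.natDegree ⊆ Finset.Ico (n - i) (n - i + r) := fun j hj => by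
    rw [Finset.mem_Icc] at hj
    exact Finset.mem_Ico.mpr ⟨hj.1, by omega⟩
  have hzero (j : ℕ) (hj : j ∈ Finset.Ico (n - i) (n - i + r))
      (hj' : j ∉ Finset.Icc (n - i) p.natDegree) : a ^ (j - (n - i)) * p.coeff j = 0 := by
    rw [coeff_eq_zero_of_natDegree_lt, mul_zero]
    exact not_le.mp fun h => hj' (Finset.mem_Icc.mpr ⟨(Finset.mem_Ico.mp hj).1, h⟩)
  rw [coeff_divByMonic_X_sub_C, show n - 1 - i + 1 = n - i by omega,
    Finset.sum_subset hsub hzero, Finset.sum_Ico_eq_sum_range, Nat.add_sub_cancel_left,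
    ← Finset.sum_range_reflect, Finset.sum_range]
  simp only [Nat.add_sub_cancel_left, mul_comm]

/-- The `r × r` matrix that expresses the `r` leading coefficients of `P / (x - a)`, for a root
`a` of a polynomial `P` of degree `n`, in terms of `(a ^ (r - 1), …, 1)`. -/
def leadHankel [CommRing K] (n r : ℕ) (P : K[X]) : Matrix (Fin r) (Fin r) K :=
  of fun i l => P.coeff (n - i + (r - 1 - l))

theorem det_leadHankel [CommRing K] {n r : ℕ} {P : K[X]} (hP : P.natDegree ≤ n) (hr : r ≤ n) :
    (leadHankel n r P).det = (-1) ^ (r * (r - 1) / 2) * P.coeff n ^ r := by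
  rw [det_of_antitriangular]
  · have hdiag (i : Fin r) : leadHankel n r P i i.rev = P.coeff n := by
      simp only [leadHankel, of_apply, Fin.val_rev]
      congr 1
      omega
    simp [hdiag]
  · intro i l hil
    rw [Fin.lt_def, Fin.val_rev] at hil
    exact coeff_eq_zero_of_natDegree_lt (hP.trans_lt (by omega))

variable [Field K] [Algebra K R]

theorem BezoutRelation.aeval_root {n : ℕ} {ω : ℕ → K[X]} {P Q : K[X]}
    {B : Matrix (Fin n) (Fin n) K} (hB : BezoutRelation n ω P Q B) {x : R}
    (hx : aeval x P = 0) :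
    ∑ i : Fin n, (ω (n - 1 - i)).map (algebraMap K R) *
      C (∑ l : Fin n, algebraMap K R (B i l) * aeval x (ω (n - 1 - l))) =
    C (aeval x Q) * (P.map (algebraMap K R) /ₘ (X - C x)) := by
  have hroot : (P.map (algebraMap K R)).IsRoot x := by rwa [IsRoot, eval_map_algebraMap]
  have hcomp : (aeval x : K[X] →ₐ[K] R).toRingHom.comp C = algebraMap K R := by
    ext; simp
  have hcoe (f : K[X]) : (aeval x : K[X] →ₐ[K] R).toRingHom f = aeval x f := rfl
  have h := congrArg (Polynomial.map (aeval x : K[X] →ₐ[K] R).toRingHom) hB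
  simp only [Polynomial.map_sub, Polynomial.map_mul, Polynomial.map_sum, Polynomial.map_map,
    hcomp, map_C, map_X, hcoe, hx, map_zero, zero_mul, sub_zero, aeval_X, aeval_C] at h
  apply (monic_X_sub_C x).isRegular.left
  dsimp only
  rw [mul_left_comm, mul_divByMonic_eq_iff_isRoot.mpr hroot, mul_comm (C _), h]
  simp only [map_sum, Finset.mul_sum, C_mul]
  exact Finset.sum_congr rfl fun i _ => Finset.sum_congr rfl fun l _ => by ring

theorem BezoutRelation.transpose_coeffMatrix_mul_topRows_mul_evalMatrix [Fintype ι]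
    [DecidableEq ι] {n : ℕ} (k : ℕ) {ω : ℕ → K[X]} (hω : IsGeneralBasis n ω) {P Q : K[X]}
    (hP : P.natDegree ≤ n) {B : Matrix (Fin n) (Fin n) K} (hB : BezoutRelation n ω P Q B)
    {z : ι → R} (hz : ∀ j, aeval (z j) P = 0) :
    ((coeffMatrix n (n - k) ω).map (algebraMap K R))ᵀ *
        ((topRows n k B).map (algebraMap K R) * evalMatrix n ω z) =
      (leadHankel n (n - k) P).map (algebraMap K R) *
        (rectVmat (n - k) z * diagonal fun j => aeval (z j) Q) := by
  ext i j
  have h := congrArg (fun f => f.coeff (n - 1 - i)) (hB.aeval_root (hz j))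
  simp only [finsetSum_coeff, coeff_mul_C, coeff_C_mul, coeff_map] at h
  rw [coeff_divByMonic_X_sub_C_eq_sum_fin (natDegree_map_le.trans hP) i.2 (Nat.sub_le n k),
    Finset.mul_sum] at h
  have hzero (l : Fin n) (hl : l ∉ Set.range (Fin.castLE (Nat.sub_le n k))) :
      algebraMap K R ((ω (n - 1 - l)).coeff (n - 1 - i)) *
        ∑ c, algebraMap K R (B l c) * aeval (z j) (ω (n - 1 - c)) = 0 := by
    have hil : (i : ℕ) < l := by
      contrapose! hl
      exact ⟨⟨l, by omega⟩, rfl⟩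
    rw [hω.coeff_eq_zero (by omega) (by omega), map_zero, zero_mul]
  rw [← Fintype.sum_of_injective _ (Fin.castLE_injective (Nat.sub_le n k)) _ _ hzero
    fun _ => rfl] at h
  rw [mul_apply, mul_apply]
  simp only [mul_diagonal]
  simp only [mul_apply, transpose_apply, map_apply, coeffMatrix, topRows, leadHankel, evalMatrix,
    rectVmat, of_apply]
  refine h.trans (Finset.sum_congr rfl fun l _ => ?_)
  rw [coeff_map]
  ring

end BezoutMatrix

section DeterminantalPolynomial

variable {K R : Type*} [CommRing R] {n k : ℕ}

/-- The determinant of the matrix formed by the first `n - k - 1` columns of `M` and a variable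
last column, as a linear form in the latter; `det M̂_i` is its value at the column `n - 1 - i`. -/
def lastColDet (hkn : k < n) (M : Matrix (Fin (n - k)) (Fin n) R) :
    (Fin (n - k) → R) →ₗ[R] R :=
  LinearMap.proj ⟨n - k - 1, by omega⟩ ∘ₗ cramer (M.submatrix id (Fin.castLE (Nat.sub_le n k)))

theorem lastColDet_apply (hkn : k < n) (M : Matrix (Fin (n - k)) (Fin n) R)
    (u : Fin (n - k) → R) :
    lastColDet hkn M u = det (of fun r c : Fin (n - k) =>
      if (c : ℕ) < n - k - 1 then M r (c.castLE (Nat.sub_le n k)) else u r) := by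
  rw [lastColDet, LinearMap.comp_apply, LinearMap.proj_apply, cramer_apply]
  congr 1
  ext r c
  have hc : c = ⟨n - k - 1, by omega⟩ ↔ ¬(c : ℕ) < n - k - 1 := by
    have : (c : ℕ) < n - k := c.isLt
    simp only [Fin.ext_iff]
    omega
  by_cases h : (c : ℕ) < n - k - 1 <;> simp [updateCol_apply, hc, h]

/-- The indices of the last `k + 1` columns of a matrix with `n` columns. -/
def lastCols (hkn : k < n) (i : Fin (k + 1)) : Fin n :=
  ⟨n - k - 1 + i, by omega⟩

theorem lastCols_injective (hkn : k < n) : Function.Injective (lastCols hkn) := fun _ _ hij =>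
  Fin.ext (Nat.add_left_cancel (congrArg Fin.val hij))

theorem aeval_detp [Field K] [Algebra K R] (hkn : k < n) (ω : ℕ → K[X])
    (M : Matrix (Fin (n - k)) (Fin n) K) (x : R) :
    aeval x (_root_.detp hkn ω M) = lastColDet hkn (M.map (algebraMap K R))
      (((M.map (algebraMap K R)).submatrix id (lastCols hkn) *
        evalMatrix (k + 1) ω fun _ : Fin 1 => x).col 0) := by
  have hcol : ((M.map (algebraMap K R)).submatrix id (lastCols hkn) *
      evalMatrix (k + 1) ω fun _ : Fin 1 => x).col 0 =
        ∑ i : Fin (k + 1), aeval x (ω (k - i)) •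
          (M.map (algebraMap K R)).col (lastCols hkn i) := by
    ext r
    simp [mul_apply, evalMatrix, mul_comm]
  rw [hcol, map_sum, _root_.detp, ← Finset.sum_range_reflect, Finset.sum_range, map_sum]
  refine Finset.sum_congr rfl fun i _ => ?_
  rw [map_smul, lastColDet_apply, map_mul, aeval_C, RingHom.map_det, smul_eq_mul, mul_comm,
    Nat.add_sub_cancel]
  have hidx : n - 1 - (k - i) = n - k - 1 + i := by omega
  congr 2
  ext r c
  by_cases h : (c : ℕ) < n - k - 1 <;> simp [h, lastCols, hidx, Fin.castLE]

/-- The identification of `n + 1` rows with the upper `n - k` and the lower `k + 1` ones. -/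
def rowBlocks (hkn : k < n) : Fin (n - k) ⊕ Fin (k + 1) ≃ Fin (n + 1) :=
  finSumFinEquiv.trans (finCongr (by omega))

/-- The order of the `n + 1` columns in which the last one is moved to position `n - k - 1`, so
that the blocks of columns have the same sizes as the blocks of rows. -/
def colBlocks (hkn : k < n) : Fin (n - k) ⊕ Fin (k + 1) ≃ Fin n ⊕ Fin 1 :=
  (rowBlocks hkn).trans
    ((Fin.cycleIcc ⟨n - k - 1, by omega⟩ (Fin.last n)).symm.trans finSumFinEquiv.symm)

theorem colBlocks_inl (hkn : k < n) (c : Fin (n - k)) :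
    colBlocks hkn (Sum.inl c) =
      if (c : ℕ) < n - k - 1 then Sum.inl (c.castLE (Nat.sub_le n k)) else Sum.inr 0 := by
  have hval : ((rowBlocks hkn (Sum.inl c) : Fin (n + 1)) : ℕ) = c := by simp [rowBlocks]
  rw [colBlocks, Equiv.trans_apply, Equiv.trans_apply, Equiv.symm_apply_eq, Equiv.symm_apply_eq]
  split_ifs with h
  · rw [finSumFinEquiv_apply_left, Fin.cycleIcc_of_lt]
    · exact Fin.ext hval
    · exact h
  · rw [finSumFinEquiv_apply_right]
    refine Eq.trans (Fin.ext ?_) (Fin.cycleIcc_of_last (Fin.le_last _)).symm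
    have := c.isLt
    rw [hval]
    simp only
    omega

theorem colBlocks_inr (hkn : k < n) (i : Fin (k + 1)) :
    colBlocks hkn (Sum.inr i) = Sum.inl (lastCols hkn i) := by
  have hsucc : rowBlocks hkn (Sum.inr i) =
      (⟨n - k - 1, by omega⟩ : Fin (n + 1)).succAbove (lastCols hkn i) := by
    rw [Fin.succAbove_of_le_castSucc _ _ (by simp [Fin.le_def, lastCols])]
    ext
    simp only [rowBlocks, lastCols, Equiv.trans_apply, finSumFinEquiv_apply_right,
      finCongr_apply, Fin.val_cast, Fin.val_natAdd, Fin.val_succ]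
    omega
  have hcycle := congrFun (Fin.cycleIcc_comp_succAbove _ _
    (Fin.le_last (⟨n - k - 1, by omega⟩ : Fin (n + 1)))) (lastCols hkn i)
  rw [Function.comp_apply, Fin.succAbove_last] at hcycle
  rw [colBlocks, Equiv.trans_apply, Equiv.trans_apply, Equiv.symm_apply_eq, Equiv.symm_apply_eq,
    hsucc, ← hcycle]
  rfl

theorem det_submatrix_rowBlocks_colBlocks (hkn : k < n)
    (M : Matrix (Fin (n + 1)) (Fin (n + 1)) R) :
    ((M.submatrix (rowBlocks hkn) finSumFinEquiv).submatrix id (colBlocks hkn)).det =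
      (-1) ^ (k + 1) * M.det := by
  have h : (M.submatrix (rowBlocks hkn) finSumFinEquiv).submatrix id (colBlocks hkn) =
      (M.submatrix id (Fin.cycleIcc ⟨n - k - 1, by omega⟩ (Fin.last n)).symm).submatrix
        (rowBlocks hkn) (rowBlocks hkn) := by
    ext i j
    simp [colBlocks]
  rw [h, det_submatrix_equiv_self, det_permute', Equiv.Perm.sign_symm,
    Fin.sign_cycleIcc_of_le (Fin.le_last _)]
  have : n - (n - k - 1) = k + 1 := by omega
  simp [this]

theorem det_bordered_selection (hkn : k < n) (M : Matrix (Fin (n - k)) (Fin n) R)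
    (v : Matrix (Fin (k + 1)) (Fin 1) R) :
    ((fromBlocks M 0 ((1 : Matrix (Fin n) (Fin n) R).submatrix (lastCols hkn) id) v).submatrix
      id (colBlocks hkn)).det =
      -lastColDet hkn M ((M.submatrix id (lastCols hkn) * v).col 0) := by
  have hblocks : (fromBlocks M 0
      ((1 : Matrix (Fin n) (Fin n) R).submatrix (lastCols hkn) id) v).submatrix
        id (colBlocks hkn) =
      fromBlocks
        (of fun r (c : Fin (n - k)) =>
          if (c : ℕ) < n - k - 1 then M r (c.castLE (Nat.sub_le n k)) else 0)
        (M.submatrix id (lastCols hkn))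
        (of fun i (c : Fin (n - k)) => if (c : ℕ) < n - k - 1 then 0 else v i 0) 1 := by
    ext (i | i) (c | c)
    · by_cases h : (c : ℕ) < n - k - 1 <;> simp [colBlocks_inl, h]
    · simp [colBlocks_inr]
    · by_cases h : (c : ℕ) < n - k - 1
      · have : lastCols hkn i ≠ Fin.castLE (Nat.sub_le n k) c := fun hic => by
          have := congrArg Fin.val hic
          simp only [lastCols, Fin.val_castLE] at this
          omega
        simp [colBlocks_inl, h, this]
      · simp [colBlocks_inl, h]
    · simp [colBlocks_inr, one_apply, (lastCols_injective hkn).eq_iff]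
  rw [hblocks, det_fromBlocks_one₂₂, ← map_neg, lastColDet_apply]
  congr 1
  ext r c
  by_cases h : (c : ℕ) < n - k - 1 <;> simp [mul_apply, h]

end DeterminantalPolynomial

section Subresultant

variable {K R : Type*} [Field K] [CommRing R] [Algebra K R] {n k : ℕ}

/-- The matrix of the root expression of the `k`-th subresultant at nodes `z` and argument `x`,
split into blocks; `subresNum` is the case `z = C ∘ α`, `x = X`. -/
def subresBlocks (k : ℕ) (Q : K[X]) (z : Fin n → R) (x : R) :
    Matrix (Fin (n - k) ⊕ Fin (k + 1)) (Fin n ⊕ Fin 1) R :=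
  fromBlocks (rectVmat (n - k) z * diagonal fun j => aeval (z j) Q) 0
    (rectVmat (k + 1) z) (rectVmat (k + 1) fun _ => x)

theorem BezoutRelation.fromBlocks_mul_subresBlocks (hkn : k < n) {ω : ℕ → K[X]}
    (hω : IsGeneralBasis n ω) {P Q : K[X]} (hP : P.natDegree ≤ n)
    {B : Matrix (Fin n) (Fin n) K} (hB : BezoutRelation n ω P Q B) {z : Fin n → R}
    (hz : ∀ j, aeval (z j) P = 0) (x : R) :
    fromBlocks ((leadHankel n (n - k) P).map (algebraMap K R)) 0 0
        ((coeffMatrix (k + 1) (k + 1) ω).map (algebraMap K R)) * subresBlocks k Q z x =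
      fromBlocks ((coeffMatrix n (n - k) ω).map (algebraMap K R))ᵀ 0 0
          (1 : Matrix (Fin (k + 1)) (Fin (k + 1)) R) *
        (fromBlocks ((topRows n k B).map (algebraMap K R)) 0
            ((1 : Matrix (Fin n) (Fin n) R).submatrix (lastCols hkn) id)
            (evalMatrix (k + 1) ω fun _ : Fin 1 => x) *
          fromBlocks (evalMatrix n ω z) 0 0 (1 : Matrix (Fin 1) (Fin 1) R)) := by
  have hlow : (1 : Matrix (Fin n) (Fin n) R).submatrix (lastCols hkn) id * evalMatrix n ω z =
      (coeffMatrix (k + 1) (k + 1) ω).map (algebraMap K R) * rectVmat (k + 1) z := by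
    rw [← hω.evalMatrix_eq (Nat.succ_le_succ hkn.le)]
    refine (one_submatrix_mul (lastCols hkn) (Equiv.refl _) _).trans ?_
    ext i j
    have : n - 1 - (n - k - 1 + i) = k - i := by omega
    simp [evalMatrix, lastCols, this]
  simp only [subresBlocks, fromBlocks_multiply, Matrix.mul_zero, Matrix.zero_mul, add_zero,
    zero_add, Matrix.mul_one, Matrix.one_mul, hlow,
    hB.transpose_coeffMatrix_mul_topRows_mul_evalMatrix k hω hP hz,
    hω.evalMatrix_eq (Nat.succ_le_succ hkn.le)]

theorem BezoutRelation.det_subresBlocks (hkn : k < n) {ω : ℕ → K[X]}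
    (hω : IsGeneralBasis n ω) {P Q : K[X]} (hP : P.natDegree ≤ n)
    {B : Matrix (Fin n) (Fin n) K} (hB : BezoutRelation n ω P Q B) {z : Fin n → R}
    (hz : ∀ j, aeval (z j) P = 0) (x : R) :
    (-1) ^ ((n - k) * (n - k - 1) / 2) * algebraMap K R (P.coeff n) ^ (n - k) *
        ((subresBlocks k Q z x).submatrix id (colBlocks hkn)).det =
      -((rectVmat n z).det * aeval x (_root_.detp hkn ω (topRows n k B))) := by
  have h := congrArg (fun M : Matrix (_ ⊕ _) (_ ⊕ _) R => (M.submatrix id (colBlocks hkn)).det)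
    (hB.fromBlocks_mul_subresBlocks hkn hω hP hz x)
  simp only [det_submatrix_mul_left, det_submatrix_mul_right, det_fromBlocks_zero₂₁,
    det_bordered_selection, det_transpose, det_one, ← aeval_detp, hω.det_evalMatrix,
    hω.det_map_coeffMatrix (Nat.succ_le_succ hkn.le) le_rfl,
    hω.det_map_coeffMatrix (Nat.le_succ n) (Nat.sub_le n k)] at h
  rw [← RingHom.mapMatrix_apply, ← RingHom.map_det, det_leadHankel hP (Nat.sub_le n k)] at h
  simp only [map_mul, map_pow, map_neg, map_one] at h
  linear_combination h

variable {L : Type*} [Field L] [Algebra K L]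

theorem submatrix_subresNum (hkn : k < n) (α : Fin n → L) (Q : K[X]) :
    (subresNum n k α Q).submatrix (rowBlocks hkn) finSumFinEquiv =
      subresBlocks k Q (C ∘ α) X := by
  have hlow (i : Fin (k + 1)) : n - (n - k + i) = k - i := by omega
  have hQ (j : Fin n) : aeval (C (α j)) Q = C (aeval (α j) Q) := by
    rw [← algebraMap_eq, aeval_algebraMap_apply]
  ext (i | i) (j | j) : 1
  · simp [subresNum, subresBlocks, rectVmat, rowBlocks, hQ]
  · simp [subresNum, subresBlocks, rowBlocks]
  · simp [subresNum, subresBlocks, rectVmat, rowBlocks, hlow]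
  · simp [subresNum, subresBlocks, rectVmat, rowBlocks, hlow]

theorem BezoutRelation.det_subresNum (hkn : k < n) {ω : ℕ → K[X]}
    (hω : IsGeneralBasis n ω) {P Q : K[X]} (hP : P.natDegree ≤ n)
    {B : Matrix (Fin n) (Fin n) K} (hB : BezoutRelation n ω P Q B) {α : Fin n → L}
    (hα : ∀ j, aeval (α j) P = 0) :
    C ((-1) ^ k * algebraMap K L (P.coeff n) ^ (n - k)) * (subresNum n k α Q).det =
      C (vmat n α).det * ((-1) ^ ((n - k) * (n - k - 1) / 2) *
        (_root_.detp hkn ω (topRows n k B)).map (algebraMap K L)) := by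
  have hz (j : Fin n) : aeval ((C ∘ α) j) P = 0 := by
    rw [Function.comp_apply, ← algebraMap_eq, aeval_algebraMap_apply, hα, map_zero]
  have hV : (rectVmat n (C ∘ α)).det = C (vmat n α).det := by
    rw [RingHom.map_det]
    congr 1
    ext i j
    simp [rectVmat, vmat]
  have h := hB.det_subresBlocks hkn hω hP hz X
  rw [← submatrix_subresNum hkn, det_submatrix_rowBlocks_colBlocks, hV, aeval_X_left_eq_map,
    Polynomial.algebraMap_apply] at h
  have hsq : ((-1 : L[X]) ^ ((n - k) * (n - k - 1) / 2)) ^ 2 = 1 := by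
    rw [← pow_mul, mul_comm, pow_mul, neg_one_sq, one_pow]
  simp only [C_mul, C_pow, C_neg, C_1]
  linear_combination -(-1) ^ ((n - k) * (n - k - 1) / 2) * h -
    (-1) ^ k * C (algebraMap K L (P.coeff n)) ^ (n - k) * (subresNum n k α Q).det * hsq

theorem bezout_subresultant_general_basis_general {ω : ℕ → K[X]}
    (hω : IsGeneralBasis n ω) {P Q : K[X]} (hkn : k < n) (hkQ : k ≤ Q.natDegree)
    (hQn : Q.natDegree ≤ n) (c : K) {α : Fin n → L}
    (hfact : P.map (algebraMap K L) = C (algebraMap K L c) * ∏ j, (X - C (α j)))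
    (hα : Function.Injective α) {B : Matrix (Fin n) (Fin n) K}
    (hB : BezoutRelation n ω P Q B) :
    C (algebraMap K L c ^ (n - Q.natDegree)) * subresPoly n Q.natDegree k c α Q =
      (-1 : L[X]) ^ ((n - k) * (n - k - 1) / 2) *
        (_root_.detp hkn ω (topRows n k B)).map (algebraMap K L) := by
  have hdeg : P.natDegree ≤ n := by
    rw [← natDegree_map (algebraMap K L), hfact]
    refine (natDegree_C_mul_le _ _).trans_eq ?_
    simp
  have hlead : algebraMap K L (P.coeff n) = algebraMap K L c := by
    have hmonic := (monic_prod_X_sub_C α Finset.univ).coeff_natDegree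
    rw [natDegree_finsetProd_X_sub_C_eq_card, Finset.card_univ, Fintype.card_fin] at hmonic
    rw [← coeff_map, hfact, coeff_C_mul, hmonic, mul_one]
  have hroot (j : Fin n) : aeval (α j) P = 0 := by
    rw [← eval_map_algebraMap, hfact, eval_mul, eval_prod,
      Finset.prod_eq_zero (Finset.mem_univ j) (by simp), mul_zero]
  have h := hB.det_subresNum hkn hω hdeg hroot
  rw [hlead] at h
  have hV : C (vmat n α).det ≠ 0 := C_ne_zero.mpr (det_vmat_ne_zero hα)
  have hcoef : (vmat n α).det * (algebraMap K L c ^ (n - Q.natDegree) *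
      ((-1) ^ k * algebraMap K L c ^ (Q.natDegree - k) / (vmat n α).det)) =
        (-1) ^ k * algebraMap K L c ^ (n - k) := by
    rw [← Nat.sub_add_sub_cancel hQn hkQ, pow_add]
    field_simp [det_vmat_ne_zero hα]
  apply mul_left_cancel₀ hV
  rw [← h, subresPoly, ← hcoef]
  simp only [C_mul, mul_assoc]

end Subresultant

/-- Main theorem, denominator-free form: for a general basis `ω`,
`F = Σ aᵢ ωᵢ` of degree `n` with squarefree `F`, `G = Σ bᵢ ωᵢ` of degree `m < n`,
and `0 ≤ k ≤ m`, one has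
`aₙ^{n−m} · S_k = (−1)^{(n−k)(n−k−1)/2} · detp_ω (B_{ω,k})` in `F̄[x]`. -/
theorem bezout_subresultant_general_basis
    {K : Type*} [Field K] (n m k : ℕ) (hmn : m < n) (hkm : k ≤ m)
    (ω : ℕ → Polynomial K) (hω : IsGeneralBasis n ω)
    (a b : ℕ → K) (P Q : Polynomial K)
    (hP : P = ∑ i ∈ Finset.range (n + 1), Polynomial.C (a i) * ω i)
    (hQ : Q = ∑ i ∈ Finset.range (m + 1), Polynomial.C (b i) * ω i)
    (han : a n ≠ 0) (hbm : b m ≠ 0)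
    (hdegP : P.natDegree = n) (hdegQ : Q.natDegree = m)
    (α : Fin n → AlgebraicClosure K)
    (hfact : P.map (algebraMap K (AlgebraicClosure K)) =
      Polynomial.C (algebraMap K (AlgebraicClosure K) (a n)) *
        ∏ j : Fin n, (Polynomial.X - Polynomial.C (α j)))
    (hdist : Function.Injective α)
    (B : Matrix (Fin n) (Fin n) K) (hB : BezoutRelation n ω P Q B) :
    Polynomial.C (algebraMap K (AlgebraicClosure K) (a n) ^ (n - m)) *
        subresPoly n m k (a n) α Q =
      (-1 : Polynomial (AlgebraicClosure K)) ^ ((n - k) * (n - k - 1) / 2) *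
        (detp (lt_of_le_of_lt hkm hmn) ω (topRows n k B)).map
          (algebraMap K (AlgebraicClosure K)) := by
  subst hdegQ
  exact bezout_subresultant_general_basis_general hω _ hkm hmn.le _ hfact hdist hB
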